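/- arXiv:2502.05412 — 5 statements merged into one kernel-verified Lean document; each statement's English description precedes it below -/
import Mathlib

section
/- Let 𝒜 = (A_1,…,A_m) be an m-tuple of n×n complex matrices. The following are equivalent: (1) 𝒜 is scalable, i.e., for every ε > 0 there exist g,h ∈ GL(n,ℂ) such that ‖T_{gᴴ𝒜h}(I) − I‖₂² + ‖T*_{gᴴ𝒜h}(I) − I‖₂² < ε², where ‖·‖₂ is the Frobenius norm; (2) the infimum over positive definite Hermitian n×n matrices X of det(Σ_{k=1}^m A_k X A_kᴴ)/det X is strictly positive; (3) for every positive semidefinite Hermitian n×n matrix X, rank(T_𝒜(X)) ≥ rank(X). -/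
noncomputable section
open scoped Classical
open Matrix
open scoped ComplexOrder

/-- The completely positive operator `T_𝒜(X) = ∑ k, A k * X * (A k)ᴴ`. -/
def Tcp {m n : ℕ} (A : Fin m → Matrix (Fin n) (Fin n) ℂ)
    (X : Matrix (Fin n) (Fin n) ℂ) : Matrix (Fin n) (Fin n) ℂ :=
  ∑ k, A k * X * (A k)ᴴ

/-- The dual operator `T*_𝒜(X) = ∑ k, (A k)ᴴ * X * A k`. -/
def TcpStar {m n : ℕ} (A : Fin m → Matrix (Fin n) (Fin n) ℂ)
    (X : Matrix (Fin n) (Fin n) ℂ) : Matrix (Fin n) (Fin n) ℂ :=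
  ∑ k, (A k)ᴴ * X * A k

/-- Squared Frobenius norm of a complex matrix. -/
def frobSq {n : ℕ} (X : Matrix (Fin n) (Fin n) ℂ) : ℝ :=
  ∑ i, ∑ j, ‖X i j‖ ^ 2

/-!
If a scaling of `A` is nearly doubly stochastic, let `P` and `Q` be the projections onto the ranges
of `X` and `T(X)`. As `T(P)` lives on the range of `Q`, `tr T(P) ≤ tr (Q T(I))`; up to a small error
the two sides are `rank X` and `rank T(X)`, which are integers and do not change under scaling.

If `T` does not decrease ranks, then `tr (Q T(P)) > 0` for all projections with
`rank P + rank Q > n`, and by compactness this is bounded below by some `c > 0`. Taking for `P` the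
eigenspaces of `X` above its `i`-th eigenvalue and for `Q` those of `T(X)` below its `i`-th
eigenvalue compares the two spectra one by one, and multiplying over `i` bounds `det T(X) / det X`.

If the capacity is positive, scale a near-minimizer of `det T(X) / det X` so that both `X` and
`T(X)` become the identity. The identity is then a near-minimizer for the scaled tuple, and the
inequality `det Y ≤ exp (tr Y - n)` forces `T*(I)` to be close to the identity.
-/

open scoped MatrixOrder

theorem rank_mul_mul_le {k l p q R : Type*} [Fintype l] [Fintype p] [Fintype q] [CommRing R]
    [Nontrivial R] (M : Matrix k l R) (X : Matrix l p R) (N : Matrix p q R) :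
    (M * X * N).rank ≤ X.rank :=
  (rank_mul_le_left _ _).trans (rank_mul_le_right _ _)

section TraceOrder

variable {ι 𝕜 : Type*} [Fintype ι] [RCLike 𝕜] {K X Y : Matrix ι ι 𝕜}

theorem trace_mul_nonneg (hK : K.PosSemidef) (hX : X.PosSemidef) : 0 ≤ (K * X).trace := by
  obtain ⟨B, rfl : K = Bᴴ * B⟩ := CStarAlgebra.nonneg_iff_eq_star_mul_self.mp hK.nonneg
  rw [← trace_mul_cycle]
  exact (hX.mul_mul_conjTranspose_same B).trace_nonneg

theorem mul_eq_zero_of_trace_mul_eq_zero (hK : K.PosSemidef) (hX : X.PosSemidef)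
    (h : (K * X).trace = 0) : K * X = 0 := by
  obtain ⟨B, rfl : K = Bᴴ * B⟩ := CStarAlgebra.nonneg_iff_eq_star_mul_self.mp hK.nonneg
  obtain ⟨C, rfl : X = Cᴴ * C⟩ := CStarAlgebra.nonneg_iff_eq_star_mul_self.mp hX.nonneg
  have hCB : C * Bᴴ = 0 := by
    rw [← trace_conjTranspose_mul_self_eq_zero_iff, ← h, ← trace_mul_cycle]
    simp only [conjTranspose_mul, conjTranspose_conjTranspose, Matrix.mul_assoc]
  have hBC : B * Cᴴ = 0 := by simpa using congrArg conjTranspose hCB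
  rw [Matrix.mul_assoc, ← Matrix.mul_assoc B, hBC, Matrix.zero_mul, Matrix.mul_zero]

theorem re_trace_mul_le_re_trace_mul (hK : K.PosSemidef) (hXY : X ≤ Y) :
    RCLike.re (K * X).trace ≤ RCLike.re (K * Y).trace := by
  have h := trace_mul_nonneg hK (le_iff.mp hXY)
  rw [Matrix.mul_sub, trace_sub, sub_nonneg] at h
  exact (RCLike.le_iff_re_im.mp h).1

theorem posSemidef_of_isStarProjection (hK : IsStarProjection K) : K.PosSemidef :=
  nonneg_iff_posSemidef.mp hK.nonneg

theorem le_re_trace_smul_one [DecidableEq ι] (hX : X.PosSemidef) :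
    X ≤ RCLike.re X.trace • (1 : Matrix ι ι 𝕜) := by
  rw [← Algebra.algebraMap_eq_smul_one]
  refine le_algebraMap_of_spectrum_le fun x hx ↦ ?_
  rw [hX.1.spectrum_real_eq_range_eigenvalues] at hx
  obtain ⟨i, rfl⟩ := hx
  rw [hX.1.trace_eq_sum_eigenvalues, ← RCLike.ofReal_sum, RCLike.ofReal_re]
  exact Finset.single_le_sum (fun j _ ↦ hX.eigenvalues_nonneg j) (Finset.mem_univ i)

theorem re_trace_mul_le_mul_re_trace (hK : K.PosSemidef) (hX : X.PosSemidef) :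
    RCLike.re (K * X).trace ≤ RCLike.re K.trace * RCLike.re X.trace := by
  refine (re_trace_mul_le_re_trace_mul hK (le_re_trace_smul_one hX)).trans_eq ?_
  rw [Matrix.mul_smul, Matrix.mul_one, trace_smul, RCLike.smul_re, mul_comm]

theorem trace_eq_rank_of_isIdempotentElem {F : Type*} [Field F] {P : Matrix ι ι F}
    (hP : IsIdempotentElem P) : P.trace = P.rank := by
  have hproj : LinearMap.IsProj (LinearMap.range P.toLin') P.toLin' :=
    LinearMap.isProj_range_iff_isIdempotentElem _ |>.mpr (hP.map (Matrix.toLinAlgEquiv' (R := F)))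
  rw [← Matrix.trace_toLin'_eq, hproj.trace]
  rfl

variable [DecidableEq ι]

theorem re_det_le_exp_re_trace_sub_card (hX : X.PosSemidef) :
    RCLike.re X.det ≤ Real.exp (RCLike.re X.trace - Fintype.card ι) := by
  rw [hX.1.det_eq_prod_eigenvalues, hX.1.trace_eq_sum_eigenvalues, ← RCLike.ofReal_prod,
    ← RCLike.ofReal_sum, RCLike.ofReal_re, RCLike.ofReal_re]
  calc ∏ i, hX.1.eigenvalues i
      ≤ ∏ i, Real.exp (hX.1.eigenvalues i - 1) :=
        Finset.prod_le_prod (fun i _ ↦ hX.eigenvalues_nonneg i) fun i _ ↦ by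
          linarith [Real.add_one_le_exp (hX.1.eigenvalues i - 1)]
    _ = Real.exp (∑ i, hX.1.eigenvalues i - Fintype.card ι) := by
        rw [← Real.exp_sum, Finset.sum_sub_distrib, Finset.sum_const, Finset.card_univ,
          nsmul_one]

theorem re_trace_sub_one_mul_self_le (hX : X.PosDef) (htrace : X.trace = Fintype.card ι) :
    RCLike.re ((X - 1) * (X - 1)).trace ≤
      Fintype.card ι * (RCLike.re X⁻¹.trace - Fintype.card ι) := by
  have hunit : IsUnit X.det := (isUnit_iff_isUnit_det X).mp hX.isUnit
  set K : Matrix ι ι 𝕜 := (X - 1) * X⁻¹ * (X - 1)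
  have hK : K.PosSemidef := by
    have h := hX.inv.posSemidef.mul_mul_conjTranspose_same (X - 1)
    rwa [(hX.1.sub isHermitian_one).eq] at h
  have hK_trace : RCLike.re K.trace = RCLike.re X⁻¹.trace - Fintype.card ι := by
    have hK_eq : K = X - 1 - 1 + X⁻¹ := by
      simp only [K, Matrix.sub_mul, Matrix.mul_sub, mul_nonsing_inv _ hunit, Matrix.one_mul,
        Matrix.mul_one, nonsing_inv_mul _ hunit]
      abel
    rw [hK_eq, trace_add, trace_sub, trace_sub, trace_one, htrace, map_add, map_sub, map_sub,
      RCLike.natCast_re]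
    ring
  have hK_mul : K * X = (X - 1) * (X - 1) := by
    simp only [K, Matrix.sub_mul, Matrix.mul_sub, mul_nonsing_inv _ hunit, Matrix.one_mul,
      Matrix.mul_one, nonsing_inv_mul _ hunit]
  calc RCLike.re ((X - 1) * (X - 1)).trace
      = RCLike.re (K * X).trace := by rw [hK_mul]
    _ ≤ RCLike.re K.trace * RCLike.re X.trace := re_trace_mul_le_mul_re_trace hK hX.posSemidef
    _ = Fintype.card ι * (RCLike.re X⁻¹.trace - Fintype.card ι) := by
        rw [hK_trace, htrace, RCLike.natCast_re, mul_comm]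

theorem exists_generalLinearGroup_mul_conjTranspose_eq (hX : X.PosDef) :
    ∃ h : GL ι 𝕜, (h : Matrix ι ι 𝕜) * (h : Matrix ι ι 𝕜)ᴴ = X := by
  obtain ⟨_, ⟨h, rfl⟩, rfl⟩ :=
    CStarAlgebra.isStrictlyPositive_iff_eq_mul_star_self.mp hX.isStrictlyPositive
  exact ⟨h, rfl⟩

theorem exists_generalLinearGroup_conjTranspose_mul_mul_eq_one (hX : X.PosDef) :
    ∃ g : GL ι 𝕜, (g : Matrix ι ι 𝕜)ᴴ * X * (g : Matrix ι ι 𝕜) = 1 := by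
  obtain ⟨h, rfl⟩ := exists_generalLinearGroup_mul_conjTranspose_eq hX
  refine ⟨star h⁻¹, ?_⟩
  have hinv : (h⁻¹ : GL ι 𝕜).val * h.val = 1 := h.inv_mul
  calc ((star h⁻¹ : GL ι 𝕜).val)ᴴ * (h.val * h.valᴴ) * (star h⁻¹ : GL ι 𝕜).val
      = (h⁻¹ : GL ι 𝕜).val * h.val * ((h⁻¹ : GL ι 𝕜).val * h.val)ᴴ := by
        rw [Units.coe_star, star_eq_conjTranspose, conjTranspose_conjTranspose, conjTranspose_mul]
        noncomm_ring
    _ = 1 := by rw [hinv, conjTranspose_one, Matrix.one_mul]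

end TraceOrder

section SpectralProjection

variable {ι 𝕜 : Type*} [Fintype ι] [RCLike 𝕜]

theorem card_lt_card_add_card_of_monovary {α β : Type*} [LinearOrder α] [LinearOrder β]
    {f : ι → α} {g : ι → β} (hfg : Monovary f g) (i : ι) :
    Fintype.card ι < ({j | f i ≤ f j} : Finset ι).card + ({j | g j ≤ g i} : Finset ι).card := by
  have hunion : ({j | f i ≤ f j} : Finset ι) ∪ ({j | g j ≤ g i} : Finset ι) = Finset.univ := by
    ext j
    simpa [or_iff_not_imp_right] using fun h ↦ hfg h
  have hinter : i ∈ ({j | f i ≤ f j} : Finset ι) ∩ ({j | g j ≤ g i} : Finset ι) := by simp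
  rw [← Finset.card_union_add_card_inter, hunion, Finset.card_univ]
  exact Nat.lt_add_of_pos_right (Finset.card_pos.mpr ⟨i, hinter⟩)

open scoped Matrix.Norms.L2Operator in
theorem isCompact_setOf_isStarProjection :
    IsCompact {P : Matrix ι ι 𝕜 | IsStarProjection P} := by
  have : ProperSpace (Matrix ι ι 𝕜) := FiniteDimensional.proper 𝕜 _
  refine Metric.isCompact_of_isClosed_isBounded ?_ ?_
  · simp only [isStarProjection_iff']
    exact (isClosed_eq (by fun_prop) continuous_id).inter (isClosed_eq (by fun_prop) continuous_id)
  · refine (Metric.isBounded_closedBall (x := 0) (r := 1)).subset fun P hP ↦ ?_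
    simpa using hP.norm_le

variable [DecidableEq ι] {X Y : Matrix ι ι 𝕜}

/-- The orthogonal projection onto the sum of the eigenspaces of the Hermitian matrix `X` with
eigenvalue in `s`. The functional calculus makes it `0` when `X` is not Hermitian. -/
def spectralProj (X : Matrix ι ι 𝕜) (s : Set ℝ) : Matrix ι ι 𝕜 :=
  cfc (s.indicator 1) X

theorem continuousOn_spectrum_real (f : ℝ → ℝ) (X : Matrix ι ι 𝕜) :
    ContinuousOn f (spectrum ℝ X) :=
  X.finite_real_spectrum.continuousOn f

theorem trace_cfc (hX : X.IsHermitian) (f : ℝ → ℝ) :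
    (cfc f X).trace = ((∑ i, f (hX.eigenvalues i) : ℝ) : 𝕜) := by
  rw [hX.cfc_eq, IsHermitian.cfc, Unitary.conjStarAlgAut_apply, trace_mul_cycle,
    Unitary.coe_star_mul_self, Matrix.one_mul, trace_diagonal, RCLike.ofReal_sum]
  rfl

theorem isStarProjection_spectralProj (X : Matrix ι ι 𝕜) (s : Set ℝ) :
    IsStarProjection (spectralProj X s) where
  isIdempotentElem := by
    have hcont := continuousOn_spectrum_real (s.indicator 1) X
    rw [IsIdempotentElem, spectralProj, ← cfc_mul _ _ X hcont hcont]
    congr 1 with x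
    by_cases hx : x ∈ s <;> simp [hx]
  isSelfAdjoint := cfc_predicate _ X

theorem rank_spectralProj (hX : X.IsHermitian) (s : Set ℝ) [DecidablePred (· ∈ s)] :
    (spectralProj X s).rank = ({i | hX.eigenvalues i ∈ s} : Finset ι).card := by
  have h : ((spectralProj X s).rank : 𝕜) = ({i | hX.eigenvalues i ∈ s} : Finset ι).card := by
    rw [← trace_eq_rank_of_isIdempotentElem (isStarProjection_spectralProj X s).isIdempotentElem,
      spectralProj, trace_cfc hX]
    simp [Set.indicator_apply]
  exact_mod_cast h

theorem rank_spectralProj_compl_zero (hX : X.IsHermitian) :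
    (spectralProj X {0}ᶜ).rank = X.rank := by
  rw [rank_spectralProj hX, hX.rank_eq_card_non_zero_eigs, Fintype.card_subtype]
  simp

theorem spectralProj_compl_zero_mul_self (hX : X.IsHermitian) : spectralProj X {0}ᶜ * X = X := by
  have hcont := continuousOn_spectrum_real (Set.indicator {0}ᶜ 1) X
  nth_rw 2 [← cfc_id' ℝ X hX.isSelfAdjoint]
  rw [spectralProj, ← cfc_mul _ _ X hcont]
  nth_rw 2 [← cfc_id' ℝ X hX.isSelfAdjoint]
  congr 1 with x
  by_cases hx : x = 0 <;> simp [hx]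

theorem exists_spectralProj_compl_zero_le_smul (hX : X.PosSemidef) :
    ∃ c : ℝ, spectralProj X {0}ᶜ ≤ c • X := by
  refine ⟨∑ i, (hX.1.eigenvalues i)⁻¹, ?_⟩
  rw [← cfc_const_mul_id _ X hX.1.isSelfAdjoint, spectralProj]
  refine cfc_mono (fun x hx ↦ ?_) (continuousOn_spectrum_real _ X)
  rw [hX.1.spectrum_real_eq_range_eigenvalues] at hx
  obtain ⟨i, rfl⟩ := hx
  obtain hi | hi := (hX.eigenvalues_nonneg i).eq_or_lt
  · simp [← hi]
  · have hle : (hX.1.eigenvalues i)⁻¹ ≤ ∑ j, (hX.1.eigenvalues j)⁻¹ :=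
      Finset.single_le_sum (fun j _ ↦ inv_nonneg.mpr (hX.eigenvalues_nonneg j)) (Finset.mem_univ i)
    calc Set.indicator {0}ᶜ 1 (hX.1.eigenvalues i)
        = (hX.1.eigenvalues i)⁻¹ * hX.1.eigenvalues i := by simp [hi.ne']
      _ ≤ (∑ j, (hX.1.eigenvalues j)⁻¹) * hX.1.eigenvalues i := by gcongr

theorem smul_spectralProj_Ici_le (hX : X.PosSemidef) (t : ℝ) :
    t • spectralProj X (Set.Ici t) ≤ X := by
  rw [spectralProj, ← cfc_smul _ _ X (continuousOn_spectrum_real _ X)]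
  nth_rw 2 [← cfc_id' ℝ X hX.1.isSelfAdjoint]
  refine cfc_mono (fun x hx ↦ ?_) (continuousOn_spectrum_real _ X)
  have hx0 : 0 ≤ x := spectrum_nonneg_of_nonneg hX.nonneg hx
  by_cases htx : t ≤ x <;> simp [htx, hx0]

theorem spectralProj_Iic_mul_self_le (hX : X.IsHermitian) (t : ℝ) :
    spectralProj X (Set.Iic t) * X ≤ t • spectralProj X (Set.Iic t) := by
  have hcont := continuousOn_spectrum_real (Set.indicator (Set.Iic t) 1) X
  nth_rw 2 [← cfc_id' ℝ X hX.isSelfAdjoint]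
  rw [spectralProj, ← cfc_mul _ _ X hcont, ← cfc_smul _ _ X hcont]
  refine cfc_mono (fun x _ ↦ ?_) (continuousOn_spectrum_real _ X) (continuousOn_spectrum_real _ X)
  by_cases hxt : x ≤ t <;> simp [hxt]

theorem monovary_eigenvalues (hX : X.IsHermitian) (hY : Y.IsHermitian) :
    Monovary hX.eigenvalues hY.eigenvalues :=
  (hX.eigenvalues₀_antitone.monovary hY.eigenvalues₀_antitone).comp_right _

theorem card_lt_rank_spectralProj_add_rank_spectralProj
    (hX : X.IsHermitian) (hY : Y.IsHermitian) (i : ι) :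
    Fintype.card ι < (spectralProj X (Set.Ici (hX.eigenvalues i))).rank +
      (spectralProj Y (Set.Iic (hY.eigenvalues i))).rank := by
  rw [rank_spectralProj hX, rank_spectralProj hY]
  exact card_lt_card_add_card_of_monovary (monovary_eigenvalues hX hY) i

end SpectralProjection

section ComplexMatrix

variable {ι : Type*} [Fintype ι] {X P : Matrix ι ι ℂ}

theorem re_trace_eq_rank_of_isIdempotentElem (hP : IsIdempotentElem P) : P.trace.re = P.rank := by
  rw [trace_eq_rank_of_isIdempotentElem hP, Complex.natCast_re]

variable [DecidableEq ι]

theorem re_det_pos (hX : X.PosDef) : 0 < X.det.re := (Complex.pos_iff.mp hX.det_pos).1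

theorem re_det_div_det (hX : X.PosDef) (z : ℂ) : (z / X.det).re = z.re / X.det.re := by
  have hdet : X.det = (X.det.re : ℂ) :=
    Complex.ext rfl (Complex.pos_iff.mp hX.det_pos).2.symm
  rw [hdet, Complex.div_ofReal_re, Complex.ofReal_re]

theorem re_det_conjTranspose_mul_mul (M X : Matrix ι ι ℂ) :
    (Mᴴ * X * M).det.re = Complex.normSq M.det * X.det.re := by
  rw [det_mul, det_mul, det_conjTranspose, mul_right_comm, RCLike.star_def,
    ← Complex.normSq_eq_conj_mul_self, Complex.re_ofReal_mul]

theorem re_det_mul_mul_conjTranspose (M X : Matrix ι ι ℂ) :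
    (M * X * Mᴴ).det.re = Complex.normSq M.det * X.det.re := by
  simpa using re_det_conjTranspose_mul_mul Mᴴ X

theorem one_le_re_det_inv (hX : X.PosDef) (htrace : X.trace = Fintype.card ι) : 1 ≤ X⁻¹.det.re := by
  have hdet_le : X.det.re ≤ 1 := by
    simpa [htrace] using re_det_le_exp_re_trace_sub_card hX.posSemidef
  rw [det_nonsing_inv, Ring.inverse_eq_inv', ← one_div, re_det_div_det hX, Complex.one_re]
  exact one_le_one_div (re_det_pos hX) hdet_le

end ComplexMatrix

section Definitions

variable {m n : ℕ}

/-- The squared distance of the tuple `B` from being doubly stochastic, i.e. from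
`T_B(I) = T*_B(I) = I`. -/
def dsDefect (B : Fin m → Matrix (Fin n) (Fin n) ℂ) : ℝ :=
  frobSq (Tcp B 1 - 1) + frobSq (TcpStar B 1 - 1)

/-- Scalability of the tuple `A`: its scalings come arbitrarily close to doubly stochastic ones. -/
def IsScalable (A : Fin m → Matrix (Fin n) (Fin n) ℂ) : Prop :=
  ∀ ε > (0 : ℝ), ∃ g h : GL (Fin n) ℂ, dsDefect (fun k ↦ g.valᴴ * A k * h.val) < ε ^ 2

/-- The property of the tuple `A` that the operator `T_A` does not decrease the rank of any
positive semidefinite matrix. -/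
def IsRankNonDecreasing (A : Fin m → Matrix (Fin n) (Fin n) ℂ) : Prop :=
  ∀ X : Matrix (Fin n) (Fin n) ℂ, X.PosSemidef → X.rank ≤ (Tcp A X).rank

/-- Gurvits' capacity of `T_A`, the infimum of `det T_A(X) / det X` over positive definite `X`.
The quotient is a nonnegative real for such `X`; taking real parts only moves it from `ℂ` to `ℝ`. -/
def capacity (A : Fin m → Matrix (Fin n) (Fin n) ℂ) : ℝ :=
  sInf {r : ℝ | ∃ X : Matrix (Fin n) (Fin n) ℂ, X.PosDef ∧ r = ((Tcp A X).det / X.det).re}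

end Definitions

section CompletelyPositive

variable {m n : ℕ} (A : Fin m → Matrix (Fin n) (Fin n) ℂ) {X Y P E : Matrix (Fin n) (Fin n) ℂ}

theorem frobSq_nonneg (X : Matrix (Fin n) (Fin n) ℂ) : 0 ≤ frobSq X :=
  Finset.sum_nonneg fun _ _ ↦ Finset.sum_nonneg fun _ _ ↦ sq_nonneg _

theorem frobSq_eq_re_trace (X : Matrix (Fin n) (Fin n) ℂ) : frobSq X = (X * Xᴴ).trace.re := by
  simp only [frobSq, trace, diag_apply, mul_apply, conjTranspose_apply, RCLike.star_def,
    Complex.mul_conj, Complex.normSq_eq_norm_sq, Complex.re_sum, Complex.ofReal_re]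

theorem norm_trace_mul_sq_le (X Y : Matrix (Fin n) (Fin n) ℂ) :
    ‖(X * Y).trace‖ ^ 2 ≤ frobSq X * frobSq Y := by
  have htrace : (X * Y).trace = ∑ p : Fin n × Fin n, X p.1 p.2 * Y p.2 p.1 := by
    simp only [trace, diag_apply, mul_apply, Fintype.sum_prod_type]
  have hX : frobSq X = ∑ p : Fin n × Fin n, ‖X p.1 p.2‖ ^ 2 := by
    simp only [frobSq, Fintype.sum_prod_type]
  have hY : frobSq Y = ∑ p : Fin n × Fin n, ‖Y p.2 p.1‖ ^ 2 := by
    simp only [frobSq, Fintype.sum_prod_type_right]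
  rw [htrace, hX, hY]
  calc ‖∑ p : Fin n × Fin n, X p.1 p.2 * Y p.2 p.1‖ ^ 2
      ≤ (∑ p : Fin n × Fin n, ‖X p.1 p.2‖ * ‖Y p.2 p.1‖) ^ 2 := by
        gcongr
        exact norm_sum_le_of_le _ fun _ _ ↦ norm_mul_le _ _
    _ ≤ _ := Finset.sum_mul_sq_le_sq_mul_sq _ _ _

theorem re_trace_mul_sq_le_of_isStarProjection (hP : IsStarProjection P)
    (E : Matrix (Fin n) (Fin n) ℂ) : (P * E).trace.re ^ 2 ≤ n * frobSq E := by
  have hP_frob : frobSq P ≤ n := by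
    rw [frobSq_eq_re_trace, ← star_eq_conjTranspose, hP.isSelfAdjoint.star_eq,
      hP.isIdempotentElem.eq, re_trace_eq_rank_of_isIdempotentElem hP.isIdempotentElem]
    exact_mod_cast P.rank_le_height
  calc (P * E).trace.re ^ 2
      ≤ ‖(P * E).trace‖ ^ 2 := sq_le_sq.mpr (by simpa using Complex.abs_re_le_norm _)
    _ ≤ frobSq P * frobSq E := norm_trace_mul_sq_le P E
    _ ≤ n * frobSq E := by gcongr; exact frobSq_nonneg E

theorem abs_re_trace_mul_lt_half (hP : IsStarProjection P) (hE : 4 * n * frobSq E < 1) :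
    |(P * E).trace.re| < 1 / 2 :=
  abs_lt_of_sq_lt_sq (by linarith [re_trace_mul_sq_le_of_isStarProjection hP E]) (by norm_num)

theorem posSemidef_tcp (hX : X.PosSemidef) : (Tcp A X).PosSemidef :=
  posSemidef_sum _ fun k _ ↦ hX.mul_mul_conjTranspose_same (A k)

theorem posSemidef_tcpStar (hX : X.PosSemidef) : (TcpStar A X).PosSemidef :=
  posSemidef_sum _ fun k _ ↦ hX.conjTranspose_mul_mul_same (A k)

theorem tcp_sub (X Y : Matrix (Fin n) (Fin n) ℂ) : Tcp A (X - Y) = Tcp A X - Tcp A Y := by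
  simp only [Tcp, Matrix.mul_sub, Matrix.sub_mul, Finset.sum_sub_distrib]

theorem tcp_smul (c : ℝ) (X : Matrix (Fin n) (Fin n) ℂ) : Tcp A (c • X) = c • Tcp A X := by
  simp only [Tcp, Matrix.mul_smul, Matrix.smul_mul, Finset.smul_sum]

theorem tcp_mono (hXY : X ≤ Y) : Tcp A X ≤ Tcp A Y := by
  rw [le_iff, ← tcp_sub]
  exact posSemidef_tcp A (le_iff.mp hXY)

theorem trace_mul_tcp (X Y : Matrix (Fin n) (Fin n) ℂ) :
    (Y * Tcp A X).trace = (TcpStar A Y * X).trace := by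
  simp only [Tcp, TcpStar, Finset.mul_sum, Finset.sum_mul, trace_sum]
  refine Finset.sum_congr rfl fun k _ ↦ ?_
  rw [← Matrix.mul_assoc, trace_mul_comm, ← Matrix.mul_assoc, ← Matrix.mul_assoc]

theorem tcp_scaled (g h X : Matrix (Fin n) (Fin n) ℂ) :
    Tcp (fun k ↦ gᴴ * A k * h) X = gᴴ * Tcp A (h * X * hᴴ) * g := by
  simp only [Tcp, Finset.mul_sum, Finset.sum_mul, conjTranspose_mul, conjTranspose_conjTranspose,
    Matrix.mul_assoc]

end CompletelyPositive

section RankOfScalable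

variable {m n : ℕ} {A B : Fin m → Matrix (Fin n) (Fin n) ℂ} {X : Matrix (Fin n) (Fin n) ℂ}

theorem re_trace_tcp_spectralProj_le (A : Fin m → Matrix (Fin n) (Fin n) ℂ) (hX : X.PosSemidef) :
    (Tcp A (spectralProj X {0}ᶜ)).trace.re ≤
      (spectralProj (Tcp A X) {0}ᶜ * Tcp A 1).trace.re := by
  set P := spectralProj X {0}ᶜ
  set Q := spectralProj (Tcp A X) {0}ᶜ
  have hP : IsStarProjection P := isStarProjection_spectralProj _ _
  have hQ : IsStarProjection Q := isStarProjection_spectralProj _ _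
  obtain ⟨c, hPX⟩ := exists_spectralProj_compl_zero_le_smul hX
  have hcompl : ((1 - Q) * Tcp A P).trace.re ≤ 0 := by
    have hzero : (1 - Q) * Tcp A X = 0 := by
      rw [Matrix.sub_mul, Matrix.one_mul, sub_eq_zero]
      exact (spectralProj_compl_zero_mul_self (posSemidef_tcp A hX).1).symm
    calc ((1 - Q) * Tcp A P).trace.re
        ≤ ((1 - Q) * Tcp A (c • X)).trace.re :=
          re_trace_mul_le_re_trace_mul (posSemidef_of_isStarProjection hQ.one_sub) (tcp_mono A hPX)
      _ = 0 := by rw [tcp_smul, Matrix.mul_smul, hzero, smul_zero, trace_zero, Complex.zero_re]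
  have hQ_mono : (Q * Tcp A P).trace.re ≤ (Q * Tcp A 1).trace.re :=
    re_trace_mul_le_re_trace_mul (posSemidef_of_isStarProjection hQ) (tcp_mono A hP.le_one)
  rw [Matrix.sub_mul, Matrix.one_mul, trace_sub, Complex.sub_re] at hcompl
  linarith

theorem isRankNonDecreasing_of_dsDefect_lt (hB : 4 * n * dsDefect B < 1) :
    IsRankNonDecreasing B := by
  intro X hX
  set P := spectralProj X {0}ᶜ
  set Q := spectralProj (Tcp B X) {0}ᶜ
  have hP : IsStarProjection P := isStarProjection_spectralProj _ _
  have hQ : IsStarProjection Q := isStarProjection_spectralProj _ _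
  rw [dsDefect, mul_add] at hB
  have hupper : (Q * Tcp B 1).trace.re < Q.rank + 1 / 2 := by
    have hB₁ : 4 * n * frobSq (Tcp B 1 - 1) < 1 := by
      have := frobSq_nonneg (TcpStar B 1 - 1)
      exact (le_add_of_nonneg_right (by positivity)).trans_lt hB
    have h := (abs_lt.mp (abs_re_trace_mul_lt_half hQ hB₁)).2
    rw [Matrix.mul_sub, Matrix.mul_one, trace_sub, Complex.sub_re,
      re_trace_eq_rank_of_isIdempotentElem hQ.isIdempotentElem] at h
    linarith
  have hlower : P.rank - 1 / 2 < (Tcp B P).trace.re := by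
    have hB₂ : 4 * n * frobSq (TcpStar B 1 - 1) < 1 := by
      have := frobSq_nonneg (Tcp B 1 - 1)
      exact (le_add_of_nonneg_left (by positivity)).trans_lt hB
    have h := (abs_lt.mp (abs_re_trace_mul_lt_half hP hB₂)).1
    rw [trace_mul_comm, Matrix.sub_mul, Matrix.one_mul, trace_sub, ← trace_mul_tcp, Matrix.one_mul,
      Complex.sub_re, re_trace_eq_rank_of_isIdempotentElem hP.isIdempotentElem] at h
    linarith
  have hlt : (P.rank : ℝ) < Q.rank + 1 := by
    linarith [re_trace_tcp_spectralProj_le B hX]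
  rw [← rank_spectralProj_compl_zero hX.1,
    ← rank_spectralProj_compl_zero (posSemidef_tcp B hX).1]
  exact Nat.lt_succ_iff.mp (by exact_mod_cast hlt)

theorem isRankNonDecreasing_of_scaled (g : Matrix (Fin n) (Fin n) ℂ) (h : GL (Fin n) ℂ)
    (hB : IsRankNonDecreasing fun k ↦ gᴴ * A k * h.val) : IsRankNonDecreasing A := by
  intro X hX
  have hh : IsUnit h.val.det := (isUnit_iff_isUnit_det _).mp h.isUnit
  set Y := h.val⁻¹ * X * (h.val⁻¹)ᴴ
  have hY : Y.PosSemidef := hX.mul_mul_conjTranspose_same _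
  have hXY : h.val * Y * h.valᴴ = X := by
    rw [Matrix.mul_assoc, Matrix.mul_assoc _ _ (h.valᴴ), ← conjTranspose_mul, mul_nonsing_inv _ hh,
      conjTranspose_one, Matrix.mul_one, mul_nonsing_inv_cancel_left _ _ hh]
  calc X.rank
      = (h.val * Y * h.valᴴ).rank := by rw [hXY]
    _ ≤ Y.rank := rank_mul_mul_le _ _ _
    _ ≤ (Tcp (fun k ↦ gᴴ * A k * h.val) Y).rank := hB Y hY
    _ = (gᴴ * Tcp A X * g).rank := by rw [tcp_scaled, hXY]
    _ ≤ (Tcp A X).rank := rank_mul_mul_le _ _ _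

theorem IsScalable.isRankNonDecreasing (hA : IsScalable A) : IsRankNonDecreasing A := by
  obtain ⟨g, h, hgh⟩ := hA (1 / (2 * n + 1)) (by positivity)
  refine isRankNonDecreasing_of_scaled g h (isRankNonDecreasing_of_dsDefect_lt ?_)
  calc 4 * n * dsDefect (fun k ↦ g.valᴴ * A k * h.val)
      ≤ 4 * n * (1 / (2 * n + 1)) ^ 2 := by gcongr
    _ < 1 := by
      field_simp
      nlinarith

end RankOfScalable

section CapacityOfRankNonDecreasing

variable {m n : ℕ} {A : Fin m → Matrix (Fin n) (Fin n) ℂ} {X P Q : Matrix (Fin n) (Fin n) ℂ}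

theorem re_trace_mul_tcp_pos (hA : IsRankNonDecreasing A) (hP : IsStarProjection P)
    (hQ : IsStarProjection Q) (hrank : n < P.rank + Q.rank) : 0 < (Q * Tcp A P).trace.re := by
  have hP_psd := posSemidef_of_isStarProjection hP
  have hQ_psd := posSemidef_of_isStarProjection hQ
  have hTP_psd := posSemidef_tcp A hP_psd
  have hnonneg := trace_mul_nonneg hQ_psd hTP_psd
  refine (Complex.pos_iff.mp (hnonneg.lt_of_ne fun hzero ↦ ?_)).1
  have hle := rank_add_rank_le_card_of_mul_eq_zero
    (mul_eq_zero_of_trace_mul_eq_zero hQ_psd hTP_psd hzero.symm)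
  rw [Fintype.card_fin] at hle
  have := hA P hP_psd
  omega

theorem exists_pos_forall_le_re_trace_mul_tcp (hA : IsRankNonDecreasing A) :
    ∃ c > 0, ∀ P Q : Matrix (Fin n) (Fin n) ℂ, IsStarProjection P → IsStarProjection Q →
      n < P.rank + Q.rank → c ≤ (Q * Tcp A P).trace.re := by
  let S : Set (Matrix (Fin n) (Fin n) ℂ × Matrix (Fin n) (Fin n) ℂ) :=
    ({P | IsStarProjection P} ×ˢ {Q | IsStarProjection Q}) ∩
      {p | (n : ℝ) + 1 ≤ p.1.trace.re + p.2.trace.re}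
  have mem_S {P Q : Matrix (Fin n) (Fin n) ℂ} :
      (P, Q) ∈ S ↔ (IsStarProjection P ∧ IsStarProjection Q) ∧ n < P.rank + Q.rank := by
    refine and_congr_right fun ⟨hP, hQ⟩ ↦ ?_
    rw [Set.mem_ofPred_eq, re_trace_eq_rank_of_isIdempotentElem hP.isIdempotentElem,
      re_trace_eq_rank_of_isIdempotentElem hQ.isIdempotentElem]
    exact_mod_cast Iff.rfl
  have hS : IsCompact S :=
    (isCompact_setOf_isStarProjection.prod isCompact_setOf_isStarProjection).inter_right
      (isClosed_le (by fun_prop) (by fun_prop))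
  have hcont : ContinuousOn (fun p : Matrix (Fin n) (Fin n) ℂ × Matrix (Fin n) (Fin n) ℂ ↦
      (p.2 * Tcp A p.1).trace.re) S := by
    unfold Tcp
    fun_prop
  obtain ⟨c, hc, hle⟩ := hS.exists_forall_le' hcont fun ⟨P, Q⟩ hPQ ↦
    re_trace_mul_tcp_pos hA (mem_S.mp hPQ).1.1 (mem_S.mp hPQ).1.2 (mem_S.mp hPQ).2
  exact ⟨c, hc, fun P Q hP hQ hrank ↦ hle (P, Q) (mem_S.mpr ⟨⟨hP, hQ⟩, hrank⟩)⟩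

theorem mul_eigenvalues_le_mul_eigenvalues_tcp {c : ℝ} (hc : ∀ P Q : Matrix (Fin n) (Fin n) ℂ,
      IsStarProjection P → IsStarProjection Q → n < P.rank + Q.rank → c ≤ (Q * Tcp A P).trace.re)
    (hX : X.PosSemidef) (i : Fin n) :
    c * hX.1.eigenvalues i ≤ n * (posSemidef_tcp A hX).1.eigenvalues i := by
  have hTX := posSemidef_tcp A hX
  set s := hX.1.eigenvalues i
  set t := hTX.1.eigenvalues i
  set P := spectralProj X (Set.Ici s)
  set Q := spectralProj (Tcp A X) (Set.Iic t)
  have hP : IsStarProjection P := isStarProjection_spectralProj _ _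
  have hQ : IsStarProjection Q := isStarProjection_spectralProj _ _
  have hs : 0 ≤ s := hX.eigenvalues_nonneg i
  have ht : 0 ≤ t := hTX.eigenvalues_nonneg i
  have hrank : n < P.rank + Q.rank := by
    simpa using card_lt_rank_spectralProj_add_rank_spectralProj hX.1 hTX.1 i
  calc c * s
      ≤ (Q * Tcp A P).trace.re * s := by gcongr; exact hc P Q hP hQ hrank
    _ = (Q * Tcp A (s • P)).trace.re := by
        rw [tcp_smul, Matrix.mul_smul, trace_smul, Complex.smul_re, smul_eq_mul, mul_comm]
    _ ≤ (Q * Tcp A X).trace.re :=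
        re_trace_mul_le_re_trace_mul (posSemidef_of_isStarProjection hQ)
          (tcp_mono A (smul_spectralProj_Ici_le hX s))
    _ ≤ (t • Q).trace.re := by
        have h := re_trace_mul_le_re_trace_mul PosSemidef.one
          (spectralProj_Iic_mul_self_le hTX.1 t)
        rwa [Matrix.one_mul, Matrix.one_mul] at h
    _ = Q.rank * t := by
        rw [trace_smul, Complex.smul_re, smul_eq_mul, mul_comm,
          re_trace_eq_rank_of_isIdempotentElem hQ.isIdempotentElem]
    _ ≤ n * t := by gcongr; exact_mod_cast Q.rank_le_height

theorem IsRankNonDecreasing.capacity_pos (hA : IsRankNonDecreasing A) : 0 < capacity A := by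
  obtain ⟨c, hc, hc_le⟩ := exists_pos_forall_le_re_trace_mul_tcp hA
  refine (show (0 : ℝ) < (c / (n + 1)) ^ n by positivity).trans_le
    (le_csInf ⟨_, 1, PosDef.one, rfl⟩ ?_)
  rintro _ ⟨X, hX, rfl⟩
  have hTX := posSemidef_tcp A hX.posSemidef
  have hdet {Y : Matrix (Fin n) (Fin n) ℂ} (hY : Y.IsHermitian) :
      Y.det.re = ∏ i, hY.eigenvalues i := by
    rw [hY.det_eq_prod_eigenvalues]
    exact_mod_cast rfl
  rw [re_det_div_det hX, le_div_iff₀ (re_det_pos hX), hdet hX.1, hdet hTX.1]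
  calc (c / (n + 1)) ^ n * ∏ i, hX.1.eigenvalues i
      = ∏ i, c / (n + 1) * hX.1.eigenvalues i := by
        rw [Finset.prod_mul_distrib, Finset.prod_const, Finset.card_univ, Fintype.card_fin]
    _ ≤ ∏ i, hTX.1.eigenvalues i := by
        refine Finset.prod_le_prod
          (fun i _ ↦ mul_nonneg (by positivity) (hX.posSemidef.eigenvalues_nonneg i)) fun i _ ↦ ?_
        rw [div_mul_eq_mul_div, div_le_iff₀ (by positivity)]
        have := mul_eigenvalues_le_mul_eigenvalues_tcp hc_le hX.posSemidef i
        linarith [hTX.eigenvalues_nonneg i]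

end CapacityOfRankNonDecreasing

section ScalableOfCapacity

variable {m n : ℕ} {A B : Fin m → Matrix (Fin n) (Fin n) ℂ} {X : Matrix (Fin n) (Fin n) ℂ}
  {δ : ℝ}

theorem capacity_mul_re_det_le (A : Fin m → Matrix (Fin n) (Fin n) ℂ) (hX : X.PosDef) :
    capacity A * X.det.re ≤ (Tcp A X).det.re := by
  rw [← le_div_iff₀ (re_det_pos hX), ← re_det_div_det hX]
  refine csInf_le ⟨0, ?_⟩ ⟨X, hX, rfl⟩
  rintro _ ⟨Y, hY, rfl⟩
  rw [re_det_div_det hY]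
  exact div_nonneg (Complex.nonneg_iff.mp (posSemidef_tcp A hY.posSemidef).det_nonneg).1
    (re_det_pos hY).le

theorem exists_re_det_tcp_lt (hA : 0 < capacity A) (hδ : 0 < δ) :
    ∃ X : Matrix (Fin n) (Fin n) ℂ, X.PosDef ∧
      (Tcp A X).det.re < (1 + δ) * capacity A * X.det.re := by
  have hlt : capacity A < (1 + δ) * capacity A := by linarith [mul_pos hδ hA]
  obtain ⟨_, ⟨X, hX, rfl⟩, hX_lt⟩ :=
    exists_lt_of_csInf_lt (by exact ⟨_, 1, PosDef.one, rfl⟩) hlt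
  rw [re_det_div_det hX, div_lt_iff₀ (re_det_pos hX)] at hX_lt
  exact ⟨X, hX, hX_lt⟩

theorem posDef_tcp_of_capacity_pos (hA : 0 < capacity A) (hX : X.PosDef) : (Tcp A X).PosDef := by
  rw [(posSemidef_tcp A hX.posSemidef).posDef_iff_det_ne_zero]
  intro hzero
  have hle := capacity_mul_re_det_le A hX
  rw [hzero, Complex.zero_re] at hle
  exact hle.not_gt (mul_pos hA (re_det_pos hX))

theorem exists_scaled_tcp_one_eq_one (hA : 0 < capacity A) (hδ : 0 < δ) :
    ∃ g h : GL (Fin n) ℂ, Tcp (fun k ↦ g.valᴴ * A k * h.val) 1 = 1 ∧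
      ∀ Y : Matrix (Fin n) (Fin n) ℂ, Y.PosDef →
        Y.det.re ≤ (1 + δ) * (Tcp (fun k ↦ g.valᴴ * A k * h.val) Y).det.re := by
  obtain ⟨X, hX, hX_lt⟩ := exists_re_det_tcp_lt hA hδ
  obtain ⟨h, rfl⟩ := exists_generalLinearGroup_mul_conjTranspose_eq hX
  obtain ⟨g, hg⟩ := exists_generalLinearGroup_conjTranspose_mul_mul_eq_one
    (posDef_tcp_of_capacity_pos hA hX)
  refine ⟨g, h, by rw [tcp_scaled, Matrix.mul_one, hg], fun Y hY ↦ ?_⟩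
  have hhYh : (h.val * Y * h.valᴴ).PosDef :=
    hY.mul_mul_conjTranspose_same (vecMul_injective_of_isUnit h.isUnit)
  have hdet_hYh : (h.val * Y * h.valᴴ).det.re = (h.val * h.valᴴ).det.re * Y.det.re := by
    have hdet_hh : (h.val * h.valᴴ).det.re = Complex.normSq h.val.det := by
      simpa using re_det_mul_mul_conjTranspose h.val 1
    rw [re_det_mul_mul_conjTranspose, hdet_hh]
  have hdet_one : 1 = Complex.normSq g.val.det * (Tcp A (h.val * h.valᴴ)).det.re := by
    rw [← re_det_conjTranspose_mul_mul, hg, det_one, Complex.one_re]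
  calc Y.det.re
      = Complex.normSq g.val.det * (Tcp A (h.val * h.valᴴ)).det.re * Y.det.re := by
        rw [← hdet_one, one_mul]
    _ ≤ Complex.normSq g.val.det * ((1 + δ) * capacity A * (h.val * h.valᴴ).det.re) * Y.det.re := by
        gcongr
        · exact (re_det_pos hY).le
        · exact Complex.normSq_nonneg _
    _ = (1 + δ) * (Complex.normSq g.val.det * (capacity A * (h.val * Y * h.valᴴ).det.re)) := by
        rw [hdet_hYh]
        ring
    _ ≤ (1 + δ) * (Complex.normSq g.val.det * (Tcp A (h.val * Y * h.valᴴ)).det.re) := by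
        gcongr
        · exact Complex.normSq_nonneg _
        · exact capacity_mul_re_det_le A hhYh
    _ = (1 + δ) * (Tcp (fun k ↦ g.valᴴ * A k * h.val) Y).det.re := by
        rw [tcp_scaled, re_det_conjTranspose_mul_mul]

theorem re_trace_inv_sub_le (hX : X.PosDef) (htrace : X.trace = n)
    (hXB : TcpStar B 1 = (2 : ℝ) • X - 1)
    (hdet : X⁻¹.det.re ≤ (1 + δ) * (Tcp B X⁻¹).det.re) : X⁻¹.trace.re - n ≤ δ := by
  have hTX := posSemidef_tcp B hX.inv.posSemidef
  have hTX_trace : (Tcp B X⁻¹).trace.re = 2 * n - X⁻¹.trace.re := by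
    rw [← Matrix.one_mul (Tcp B X⁻¹), trace_mul_tcp, hXB, Matrix.sub_mul, Matrix.one_mul,
      Matrix.smul_mul, mul_nonsing_inv _ ((isUnit_iff_isUnit_det X).mp hX.isUnit), trace_sub,
      trace_smul, trace_one]
    simp
  have hTX_det : (Tcp B X⁻¹).det.re ≤ Real.exp (n - X⁻¹.trace.re) := by
    refine (re_det_le_exp_re_trace_sub_card hTX).trans_eq ?_
    rw [RCLike.re_eq_complex_re, hTX_trace, Fintype.card_fin]
    ring_nf
  have hone : 1 ≤ (1 + δ) * (Tcp B X⁻¹).det.re :=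
    (one_le_re_det_inv hX (by simpa using htrace)).trans hdet
  have hδ : 0 < 1 + δ :=
    pos_of_mul_pos_left (one_pos.trans_le hone) (Complex.nonneg_iff.mp hTX.det_nonneg).1
  have hexp : Real.exp (X⁻¹.trace.re - n) ≤ 1 + δ := by
    rw [← neg_sub, Real.exp_neg, inv_le_iff_one_le_mul₀ (Real.exp_pos _)]
    exact hone.trans (by gcongr)
  linarith [Real.add_one_le_exp (X⁻¹.trace.re - n)]

-- The hypothesis on determinants is tested at `M⁻¹`, where `M = (1 + T*_B(1)) / 2` stands in for
-- `T*_B(1)`, which need not be invertible.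
theorem frobSq_tcpStar_one_sub_one_le (hB : Tcp B 1 = 1)
    (hdet : ∀ Y : Matrix (Fin n) (Fin n) ℂ, Y.PosDef → Y.det.re ≤ (1 + δ) * (Tcp B Y).det.re) :
    frobSq (TcpStar B 1 - 1) ≤ 4 * n * δ := by
  set Z := TcpStar B 1 with hZ_def
  set M : Matrix (Fin n) (Fin n) ℂ := (1 / 2 : ℝ) • (1 + Z) with hM_def
  have hZ : Z.PosSemidef := posSemidef_tcpStar B PosSemidef.one
  have hM : M.PosDef := (PosDef.one.add_posSemidef hZ).smul (by norm_num)
  have hZM : Z = (2 : ℝ) • M - 1 := by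
    rw [hM_def, smul_smul]
    norm_num
  have hM_trace : M.trace = n := by
    have hZ_trace : Z.trace = n := by
      rw [← Matrix.mul_one Z, ← trace_mul_tcp, hB, Matrix.one_mul, trace_one, Fintype.card_fin]
    rw [trace_smul, trace_add, trace_one, hZ_trace, Fintype.card_fin, ← two_mul,
      Complex.real_smul]
    push_cast
    ring
  have hZ_sub : Z - 1 = (2 : ℝ) • (M - 1) := by
    rw [hZM, smul_sub, two_smul ℝ (1 : Matrix (Fin n) (Fin n) ℂ), sub_sub]
  have hM_inv := re_trace_inv_sub_le hM hM_trace (hZ_def ▸ hZM) (hdet _ hM.inv)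
  calc frobSq (Z - 1)
      = 4 * ((M - 1) * (M - 1)).trace.re := by
        rw [frobSq_eq_re_trace, (hZ.1.sub isHermitian_one).eq, hZ_sub, Matrix.smul_mul,
          Matrix.mul_smul, smul_smul, trace_smul, Complex.smul_re, smul_eq_mul]
        norm_num
    _ ≤ 4 * (n * (M⁻¹.trace.re - n)) := by
        gcongr
        simpa using re_trace_sub_one_mul_self_le hM (by simpa using hM_trace)
    _ ≤ 4 * n * δ := by
        rw [← mul_assoc]
        gcongr

theorem isScalable_of_capacity_pos (hA : 0 < capacity A) : IsScalable A := by
  intro ε hε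
  obtain ⟨g, h, hone, hdet⟩ :=
    exists_scaled_tcp_one_eq_one hA (show 0 < ε ^ 2 / (4 * n + 1) by positivity)
  refine ⟨g, h, ?_⟩
  calc dsDefect (fun k ↦ g.valᴴ * A k * h.val)
      = frobSq (TcpStar (fun k ↦ g.valᴴ * A k * h.val) 1 - 1) := by
        simp [dsDefect, hone, frobSq]
    _ ≤ 4 * n * (ε ^ 2 / (4 * n + 1)) := frobSq_tcpStar_one_sub_one_le hone hdet
    _ < ε ^ 2 := by
        rw [← mul_div_assoc, div_lt_iff₀ (by positivity)]
        linarith [pow_pos hε 2]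

end ScalableOfCapacity

/-- Gurvits' characterization of scalability: (1) `𝒜` is approximately doubly-stochastic
scalable; (2) the capacity-type infimum is positive; (3) `rank T_𝒜(X) ≥ rank X` for all
positive semidefinite `X`. -/
theorem gurvits_scalability_tfae {m n : ℕ} (A : Fin m → Matrix (Fin n) (Fin n) ℂ) :
    List.TFAE
      [ (∀ ε > (0 : ℝ), ∃ g h : GL (Fin n) ℂ,
          frobSq (Tcp (fun k => (↑g)ᴴ * A k * (↑h : Matrix (Fin n) (Fin n) ℂ)) 1 - 1)
            + frobSq (TcpStar (fun k => (↑g)ᴴ * A k * (↑h : Matrix (Fin n) (Fin n) ℂ)) 1 - 1)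
            < ε ^ 2),
        (0 < sInf {r : ℝ | ∃ X : Matrix (Fin n) (Fin n) ℂ, X.PosDef ∧
            r = ((Tcp A X).det / X.det).re}),
        (∀ X : Matrix (Fin n) (Fin n) ℂ, X.PosSemidef → X.rank ≤ (Tcp A X).rank) ] := by
  tfae_have 1 → 3 := IsScalable.isRankNonDecreasing
  tfae_have 3 → 2 := IsRankNonDecreasing.capacity_pos
  tfae_have 2 → 1 := isScalable_of_capacity_pos
  tfae_finish
end
end

section
/- Let v be a norm on ℝ^n that is invariant under coordinate permutations. Then the function H ↦ ‖H‖_v := v(λ(H)), where λ(H) ∈ ℝ^n is the vector of eigenvalues of the Hermitian matrix H, is a norm on the real vector space of n×n Hermitian matrices; in particular it satisfies the triangle inequality ‖H + K‖_v ≤ ‖H‖_v + ‖K‖_v for all Hermitian H, K. -/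
noncomputable section
open scoped Classical
open Matrix

/-!
Schur's theorem: the diagonal of a unitary conjugate `U * H * star U` of a Hermitian matrix `H` is
the image of its eigenvalue vector under the doubly stochastic matrix of squared moduli of the
entries of a unitary. By Birkhoff's theorem it is a convex combination of permutations of the
eigenvalue vector, so a permutation-invariant convex function is at most as large there as at the
eigenvalue vector. Equality occurs when `U` diagonalizes `H`. Choosing the `U` that diagonalizes
`H + K`, the triangle inequality for matrices reduces to the one for the diagonals, which are
additive in the matrix. Homogeneity follows in the same way, one inequality from the `U` that
diagonalizes `c • H` and the other from the one that diagonalizes `H`.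
-/

section DoublyStochastic

variable {R ι β : Type*} [Field R] [LinearOrder R] [IsStrictOrderedRing R]
  [Fintype ι] [DecidableEq ι]

lemma exists_mulVec_eq_sum_perm_of_mem_doublyStochastic {M : Matrix ι ι R}
    (hM : M ∈ doublyStochastic R ι) :
    ∃ w : Equiv.Perm ι → R, (∀ σ, 0 ≤ w σ) ∧ ∑ σ, w σ = 1 ∧
      ∀ x : ι → R, M *ᵥ x = ∑ σ, w σ • (x ∘ σ) := by
  obtain ⟨w, hw_nonneg, hw_sum, rfl⟩ := exists_eq_sum_perm_of_mem_doublyStochastic hM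
  refine ⟨w, hw_nonneg, hw_sum, fun x => ?_⟩
  simp only [sum_mulVec, smul_mulVec, permMatrix_mulVec]

lemma map_mulVec_le_of_mem_doublyStochastic [AddCommGroup β] [PartialOrder β]
    [IsOrderedAddMonoid β] [Module R β] [IsStrictOrderedModule R β] {f : (ι → R) → β}
    (hf : ConvexOn R Set.univ f) (hf_perm : ∀ (σ : Equiv.Perm ι) (x : ι → R), f (x ∘ σ) = f x)
    {M : Matrix ι ι R} (hM : M ∈ doublyStochastic R ι) (x : ι → R) :
    f (M *ᵥ x) ≤ f x := by
  obtain ⟨w, hw_nonneg, hw_sum, hw⟩ := exists_mulVec_eq_sum_perm_of_mem_doublyStochastic hM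
  calc f (M *ᵥ x) = f (∑ σ, w σ • (x ∘ σ)) := by rw [hw]
    _ ≤ ∑ σ, w σ • f (x ∘ σ) :=
      hf.map_sum_le (fun σ _ => hw_nonneg σ) hw_sum fun _ _ => Set.mem_univ _
    _ = f x := by simp only [hf_perm, ← Finset.sum_smul, hw_sum, one_smul]

end DoublyStochastic

section Schur

variable {𝕜 ι : Type*} [RCLike 𝕜] [Fintype ι] [DecidableEq ι]

/-- The matrix of squared moduli of the entries of `A`; for unitary `A` this is the
*unistochastic* matrix of `A`. -/
def sqNormMatrix {m n α : Type*} [Norm α] (A : Matrix m n α) : Matrix m n ℝ :=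
  A.map fun z => ‖z‖ ^ 2

lemma sqNormMatrix_mem_doublyStochastic (U : unitaryGroup ι 𝕜) :
    sqNormMatrix (U : Matrix ι ι 𝕜) ∈ doublyStochastic ℝ ι := by
  refine mem_doublyStochastic_iff_sum.2 ⟨fun i j => sq_nonneg _, fun i => ?_, fun j => ?_⟩
  · have row_inner_self := congr_fun₂ (mem_unitaryGroup_iff.1 U.2) i i
    simp only [mul_apply, star_apply, one_apply_eq, RCLike.star_def, RCLike.mul_conj]
      at row_inner_self
    exact_mod_cast row_inner_self
  · have col_inner_self := congr_fun₂ (mem_unitaryGroup_iff'.1 U.2) j j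
    simp only [mul_apply, star_apply, one_apply_eq, RCLike.star_def, RCLike.conj_mul]
      at col_inner_self
    exact_mod_cast col_inner_self

/-- The real part of the diagonal of `U * H * star U`, as a real-linear function of `H`. For
Hermitian `H` this diagonal is already real, and it is the diagonal of `H` in the orthonormal
basis formed by the columns of `star U`. -/
def rotatedDiag (U : unitaryGroup ι 𝕜) : Matrix ι ι 𝕜 →ₗ[ℝ] ι → ℝ :=
  RCLike.reLm.compLeft ι ∘ₗ diagLinearMap ι ℝ 𝕜 ∘ₗ
    (Unitary.conjStarAlgAut ℝ _ U).toAlgEquiv.toLinearMap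

lemma rotatedDiag_apply (U : unitaryGroup ι 𝕜) (H : Matrix ι ι 𝕜) (i : ι) :
    rotatedDiag U H i = RCLike.re (Unitary.conjStarAlgAut 𝕜 _ U H i i) :=
  rfl

lemma rotatedDiag_conjStarAlgAut (W U : unitaryGroup ι 𝕜) (H : Matrix ι ι 𝕜) :
    rotatedDiag W (Unitary.conjStarAlgAut 𝕜 _ U H) = rotatedDiag (W * U) H := by
  ext i
  simp only [rotatedDiag_apply, Unitary.conjStarAlgAut_mul_apply]

lemma rotatedDiag_diagonal (U : unitaryGroup ι 𝕜) (d : ι → ℝ) :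
    rotatedDiag U (diagonal (RCLike.ofReal ∘ d)) = sqNormMatrix (U : Matrix ι ι 𝕜) *ᵥ d := by
  ext i
  rw [rotatedDiag_apply, Unitary.conjStarAlgAut_apply, mul_apply, map_sum]
  refine Finset.sum_congr rfl fun j _ => ?_
  rw [mul_diagonal, star_apply, mul_right_comm, RCLike.star_def, RCLike.mul_conj]
  simp only [Function.comp_apply, sqNormMatrix, map_apply]
  norm_cast

variable {H : Matrix ι ι 𝕜}

lemma rotatedDiag_star_eigenvectorUnitary (hH : H.IsHermitian) :
    rotatedDiag (star hH.eigenvectorUnitary) H = hH.eigenvalues := by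
  ext i
  rw [rotatedDiag_apply, hH.conjStarAlgAut_star_eigenvectorUnitary, diagonal_apply_eq,
    Function.comp_apply, RCLike.ofReal_re]

lemma rotatedDiag_eq_sqNormMatrix_mulVec_eigenvalues (hH : H.IsHermitian)
    (W : unitaryGroup ι 𝕜) :
    rotatedDiag W H =
      sqNormMatrix (W * hH.eigenvectorUnitary : Matrix ι ι 𝕜) *ᵥ hH.eigenvalues := by
  conv_lhs => rw [hH.spectral_theorem, rotatedDiag_conjStarAlgAut, rotatedDiag_diagonal]
  rfl

lemma map_rotatedDiag_le_map_eigenvalues {β : Type*} [AddCommGroup β] [PartialOrder β]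
    [IsOrderedAddMonoid β] [Module ℝ β] [IsStrictOrderedModule ℝ β] {f : (ι → ℝ) → β}
    (hf : ConvexOn ℝ Set.univ f) (hf_perm : ∀ (σ : Equiv.Perm ι) (x : ι → ℝ), f (x ∘ σ) = f x)
    (hH : H.IsHermitian) (W : unitaryGroup ι 𝕜) :
    f (rotatedDiag W H) ≤ f hH.eigenvalues := by
  rw [rotatedDiag_eq_sqNormMatrix_mulVec_eigenvalues hH]
  exact map_mulVec_le_of_mem_doublyStochastic hf hf_perm
    (sqNormMatrix_mem_doublyStochastic (W * hH.eigenvectorUnitary)) _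

end Schur

section PermInvariantSeminorm

variable {𝕜 ι : Type*} [RCLike 𝕜] [Fintype ι] [DecidableEq ι] {H K : Matrix ι ι 𝕜}
  {p : Seminorm ℝ (ι → ℝ)}

lemma seminorm_eigenvalues_add_le
    (hp_perm : ∀ (σ : Equiv.Perm ι) (x : ι → ℝ), p (x ∘ σ) = p x)
    (hH : H.IsHermitian) (hK : K.IsHermitian) (hHK : (H + K).IsHermitian) :
    p hHK.eigenvalues ≤ p hH.eigenvalues + p hK.eigenvalues := by
  set U := star hHK.eigenvectorUnitary
  calc p hHK.eigenvalues = p (rotatedDiag U H + rotatedDiag U K) := by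
        rw [← map_add, rotatedDiag_star_eigenvectorUnitary]
    _ ≤ p (rotatedDiag U H) + p (rotatedDiag U K) := map_add_le_add p _ _
    _ ≤ p hH.eigenvalues + p hK.eigenvalues := by
        gcongr <;> exact map_rotatedDiag_le_map_eigenvalues p.convexOn hp_perm _ U

lemma seminorm_eigenvalues_smul
    (hp_perm : ∀ (σ : Equiv.Perm ι) (x : ι → ℝ), p (x ∘ σ) = p x)
    (hH : H.IsHermitian) (c : ℝ) (hcH : (c • H).IsHermitian) :
    p hcH.eigenvalues = |c| * p hH.eigenvalues := by
  have map_diag_smul (U : unitaryGroup ι 𝕜) :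
      p (rotatedDiag U (c • H)) = |c| * p (rotatedDiag U H) := by
    rw [map_smul, map_smul_eq_mul, Real.norm_eq_abs]
  apply le_antisymm
  · rw [← rotatedDiag_star_eigenvectorUnitary hcH, map_diag_smul]
    gcongr
    exact map_rotatedDiag_le_map_eigenvalues p.convexOn hp_perm hH _
  · rw [← rotatedDiag_star_eigenvectorUnitary hH, ← map_diag_smul]
    exact map_rotatedDiag_le_map_eigenvalues p.convexOn hp_perm hcH _

end PermInvariantSeminorm

theorem hermitian_vnorm_is_norm_general {𝕜 ι : Type*} [RCLike 𝕜] [Fintype ι] [DecidableEq ι]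
    (v : (ι → ℝ) → ℝ)
    (hv_eq0 : ∀ x, v x = 0 ↔ x = 0)
    (hv_smul : ∀ (c : ℝ) (x : ι → ℝ), v (c • x) = |c| * v x)
    (hv_add : ∀ x y, v (x + y) ≤ v x + v y)
    (hv_perm : ∀ (σ : Equiv.Perm ι) (x : ι → ℝ), v (x ∘ σ) = v x) :
    (∀ (H : Matrix ι ι 𝕜) (hH : H.IsHermitian), (v hH.eigenvalues = 0 ↔ H = 0))
      ∧ (∀ (H : Matrix ι ι 𝕜) (hH : H.IsHermitian) (c : ℝ) (hcH : (c • H).IsHermitian),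
          v hcH.eigenvalues = |c| * v hH.eigenvalues)
      ∧ (∀ (H K : Matrix ι ι 𝕜) (hH : H.IsHermitian) (hK : K.IsHermitian)
          (hHK : (H + K).IsHermitian),
          v hHK.eigenvalues ≤ v hH.eigenvalues + v hK.eigenvalues) := by
  let p : Seminorm ℝ (ι → ℝ) := Seminorm.of v hv_add hv_smul
  have hp_perm : ∀ (σ : Equiv.Perm ι) (x : ι → ℝ), p (x ∘ σ) = p x := hv_perm
  exact ⟨fun H hH => (hv_eq0 _).trans hH.eigenvalues_eq_zero_iff,
    fun H hH c hcH => seminorm_eigenvalues_smul hp_perm hH c hcH,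
    fun H K hH hK hHK => seminorm_eigenvalues_add_le hp_perm hH hK hHK⟩

/-- Given a permutation-invariant norm `v` on `ℝⁿ`, the map `H ↦ v(λ(H))` on Hermitian
matrices is a norm: it is definite, absolutely homogeneous, and satisfies the triangle
inequality. -/
theorem hermitian_vnorm_is_norm {n : ℕ} (v : (Fin n → ℝ) → ℝ)
    (hv_eq0 : ∀ x, v x = 0 ↔ x = 0)
    (hv_smul : ∀ (c : ℝ) (x : Fin n → ℝ), v (c • x) = |c| * v x)
    (hv_add : ∀ x y, v (x + y) ≤ v x + v y)
    (hv_perm : ∀ (σ : Equiv.Perm (Fin n)) (x : Fin n → ℝ), v (x ∘ σ) = v x) :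
    (∀ (H : Matrix (Fin n) (Fin n) ℂ) (hH : H.IsHermitian),
        (v hH.eigenvalues = 0 ↔ H = 0))
      ∧ (∀ (H : Matrix (Fin n) (Fin n) ℂ) (hH : H.IsHermitian) (c : ℝ)
          (hcH : (c • H).IsHermitian),
          v hcH.eigenvalues = |c| * v hH.eigenvalues)
      ∧ (∀ (H K : Matrix (Fin n) (Fin n) ℂ) (hH : H.IsHermitian) (hK : K.IsHermitian)
          (hHK : (H + K).IsHermitian),
          v hHK.eigenvalues ≤ v hH.eigenvalues + v hK.eigenvalues) := by
  exact hermitian_vnorm_is_norm_general v hv_eq0 hv_smul hv_add hv_perm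
end
end

section
/- Let v be a norm on ℝ^n invariant under coordinate permutations, and let v* be its dual norm on ℝ^n. Then the dual norm of ‖·‖_v on the space of n×n Hermitian matrices (with respect to the trace pairing (H,X) ↦ tr(HX)) equals ‖·‖_{v*}; that is, for every Hermitian H, max{ tr(HX) : X Hermitian, ‖X‖_v ≤ 1 } = v*(λ(H)). -/
noncomputable section
open scoped Classical
open Matrix

/-! Conjugating a real diagonal matrix `diag(y)` by a unitary `W` produces a matrix with diagonal
`D y`, where `D = (|W i j|²)` is doubly stochastic. By Birkhoff's theorem `D` maps every convex
permutation-invariant set `K`, such as the unit ball of `v`, into itself. If `H = U diag(λ(H)) U*`,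
then `tr(HX) = ∑ λᵢ(H) (U* X U)ᵢᵢ`, and the diagonals of the matrices `U* X U` with `λ(X) ∈ K` are
exactly the elements of `K`: the diagonal is `D λ(X)`, and conversely `y ∈ K` is the diagonal for
`X = U diag(y) U*`, whose eigenvalue vector, being the diagonal of a unitary conjugate of `diag(y)`,
is again of the form `D y`. -/

theorem convex_setOf_le_of_add_le_of_smul {E : Type*} [AddCommGroup E] [Module ℝ E] {f : E → ℝ}
    (hf_add : ∀ x y, f (x + y) ≤ f x + f y) (hf_smul : ∀ (c : ℝ) (x : E), f (c • x) = |c| * f x)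
    (r : ℝ) : Convex ℝ {x | f x ≤ r} := by
  have hball : Convex ℝ ((Seminorm.of f hf_add hf_smul).closedBall 0 r) :=
    Seminorm.convex_closedBall _ 0 r
  rwa [Seminorm.closedBall_zero_eq] at hball

theorem mulVec_mem_of_mem_doublyStochastic {n R : Type*} [Fintype n] [DecidableEq n]
    [Field R] [LinearOrder R] [IsStrictOrderedRing R]
    {K : Set (n → R)} (hK : Convex R K) (hK_perm : ∀ (σ : Equiv.Perm n), ∀ x ∈ K, x ∘ σ ∈ K)
    {M : Matrix n n R} (hM : M ∈ doublyStochastic R n) {x : n → R} (hx : x ∈ K) :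
    M *ᵥ x ∈ K := by
  have hconvex : Convex R {A : Matrix n n R | A *ᵥ x ∈ K} :=
    hK.is_linear_preimage ⟨fun A B ↦ add_mulVec A B x, fun c A ↦ smul_mulVec c A x⟩
  rw [← SetLike.mem_coe, doublyStochastic_eq_convexHull_permMatrix] at hM
  refine convexHull_min ?_ hconvex hM
  rintro _ ⟨σ, rfl⟩
  simpa only [Set.mem_ofPred_eq, permMatrix_mulVec] using hK_perm σ x hx

section UnitaryConjugation

open Unitary (conjStarAlgAut)

variable {𝕜 m n : Type*} [RCLike 𝕜]

/-- The matrix `(‖A i j‖ ^ 2)` of squared moduli of the entries of `A`; for unitary `A` it is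
the unistochastic matrix of `A`. -/
def entrywiseNormSq (A : Matrix m n 𝕜) : Matrix m n ℝ :=
  A.map fun z ↦ ‖z‖ ^ 2

variable [Fintype n] [DecidableEq n]

theorem unitaryGroup_sum_norm_sq_row (U : unitaryGroup n 𝕜) (i : n) :
    ∑ j, ‖(U : Matrix n n 𝕜) i j‖ ^ 2 = 1 := by
  have hdiag : ((U : Matrix n n 𝕜) * star (U : Matrix n n 𝕜)) i i = 1 := by
    rw [mem_unitaryGroup_iff.mp U.2, one_apply_eq]
  simp only [mul_apply, star_apply, RCLike.star_def, RCLike.mul_conj] at hdiag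
  exact_mod_cast hdiag

theorem entrywiseNormSq_mem_doublyStochastic (U : unitaryGroup n 𝕜) :
    entrywiseNormSq (U : Matrix n n 𝕜) ∈ doublyStochastic ℝ n := by
  refine mem_doublyStochastic_iff_sum.mpr
    ⟨fun _ _ ↦ sq_nonneg _, unitaryGroup_sum_norm_sq_row U, fun j ↦ ?_⟩
  simpa [entrywiseNormSq] using unitaryGroup_sum_norm_sq_row (star U) j

theorem re_diag_mul_diagonal_mul_conjTranspose (A : Matrix m n 𝕜) (y : n → ℝ) :
    RCLike.re ∘ diag (A * (diagonal (RCLike.ofReal ∘ y) : Matrix n n 𝕜) * Aᴴ) =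
      entrywiseNormSq A *ᵥ y := by
  ext i
  rw [Function.comp_apply, diag_apply, mul_apply, map_sum]
  refine Finset.sum_congr rfl fun j _ ↦ ?_
  rw [mul_diagonal, conjTranspose_apply, RCLike.star_def, mul_right_comm, RCLike.mul_conj]
  simp only [entrywiseNormSq, map_apply, Function.comp_apply]
  norm_cast

theorem isHermitian_conj_diagonal (U : unitaryGroup n 𝕜) (y : n → ℝ) :
    (conjStarAlgAut 𝕜 _ U (diagonal (RCLike.ofReal ∘ y))).IsHermitian := by
  have hdiag : (diagonal (RCLike.ofReal ∘ y) : Matrix n n 𝕜).IsHermitian :=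
    isHermitian_diagonal_of_self_adjoint _ (funext fun i ↦ RCLike.conj_ofReal (y i))
  exact IsSelfAdjoint.map hdiag (conjStarAlgAut 𝕜 _ U)

theorem re_trace_mul_eq_sum_eigenvalues_mul {H : Matrix n n 𝕜} (hH : H.IsHermitian)
    (X : Matrix n n 𝕜) :
    RCLike.re (H * X).trace = ∑ i, hH.eigenvalues i *
      (RCLike.re ∘ diag (conjStarAlgAut 𝕜 _ (star hH.eigenvectorUnitary) X)) i := by
  have htrace : (H * X).trace = (diagonal (RCLike.ofReal ∘ hH.eigenvalues) *
      conjStarAlgAut 𝕜 _ (star hH.eigenvectorUnitary) X).trace := by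
    rw [← hH.conjStarAlgAut_star_eigenvectorUnitary, ← map_mul,
      Unitary.conjStarAlgAut_star_apply, trace_mul_cycle,
      mem_unitaryGroup_iff.mp hH.eigenvectorUnitary.2, one_mul]
  rw [htrace]
  simp only [trace, map_sum, diag_apply, diagonal_mul, Function.comp_apply,
    RCLike.re_ofReal_mul]

variable {K : Set (n → ℝ)}

theorem re_diag_conj_diagonal_mem (hK : Convex ℝ K)
    (hK_perm : ∀ (σ : Equiv.Perm n), ∀ x ∈ K, x ∘ σ ∈ K)
    (U : unitaryGroup n 𝕜) {y : n → ℝ} (hy : y ∈ K) :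
    RCLike.re ∘ diag (conjStarAlgAut 𝕜 _ U (diagonal (RCLike.ofReal ∘ y))) ∈ K := by
  rw [Unitary.conjStarAlgAut_apply, star_eq_conjTranspose, re_diag_mul_diagonal_mul_conjTranspose]
  exact mulVec_mem_of_mem_doublyStochastic hK hK_perm (entrywiseNormSq_mem_doublyStochastic U) hy

theorem eigenvalues_mem_iff_forall_re_diag_conj_mem (hK : Convex ℝ K)
    (hK_perm : ∀ (σ : Equiv.Perm n), ∀ x ∈ K, x ∘ σ ∈ K)
    {X : Matrix n n 𝕜} (hX : X.IsHermitian) :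
    hX.eigenvalues ∈ K ↔
      ∀ U : unitaryGroup n 𝕜, RCLike.re ∘ diag (conjStarAlgAut 𝕜 _ U X) ∈ K := by
  constructor
  · intro hmem U
    rw [hX.spectral_theorem, ← Unitary.conjStarAlgAut_mul_apply]
    exact re_diag_conj_diagonal_mem hK hK_perm _ hmem
  · intro hforall
    have hdiag := hforall (star hX.eigenvectorUnitary)
    rw [hX.conjStarAlgAut_star_eigenvectorUnitary, diag_diagonal] at hdiag
    simpa only [Function.comp_def, RCLike.ofReal_re] using hdiag

theorem eigenvalues_conj_diagonal_mem (hK : Convex ℝ K)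
    (hK_perm : ∀ (σ : Equiv.Perm n), ∀ x ∈ K, x ∘ σ ∈ K)
    (U : unitaryGroup n 𝕜) {y : n → ℝ} (hy : y ∈ K) :
    (isHermitian_conj_diagonal U y).eigenvalues ∈ K := by
  refine (eigenvalues_mem_iff_forall_re_diag_conj_mem hK hK_perm _).mpr fun W ↦ ?_
  rw [← Unitary.conjStarAlgAut_mul_apply]
  exact re_diag_conj_diagonal_mem hK hK_perm _ hy

/-- When `K` is the unit ball of `v`, the left-hand side is the set of values `tr(HX)` with
`‖X‖_v ≤ 1`, and the right-hand side is the set whose maximum defines `v*(λ(H))`. -/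
theorem dual_norm_hermitian_general (hK : Convex ℝ K)
    (hK_perm : ∀ (σ : Equiv.Perm n), ∀ x ∈ K, x ∘ σ ∈ K)
    {H : Matrix n n 𝕜} (hH : H.IsHermitian) :
    {r : ℝ | ∃ (X : Matrix n n 𝕜) (hX : X.IsHermitian),
      hX.eigenvalues ∈ K ∧ r = RCLike.re (H * X).trace} =
    {r : ℝ | ∃ y ∈ K, r = ∑ i, hH.eigenvalues i * y i} := by
  ext r
  constructor
  · rintro ⟨X, hX, hX_mem, rfl⟩
    exact ⟨_, (eigenvalues_mem_iff_forall_re_diag_conj_mem hK hK_perm hX).mp hX_mem _,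
      re_trace_mul_eq_sum_eigenvalues_mul hH X⟩
  · rintro ⟨y, hy, rfl⟩
    refine ⟨_, isHermitian_conj_diagonal hH.eigenvectorUnitary y,
      eigenvalues_conj_diagonal_mem hK hK_perm _ hy, ?_⟩
    rw [re_trace_mul_eq_sum_eigenvalues_mul hH, ← Unitary.conjStarAlgAut_mul_apply,
      Unitary.star_mul_self, map_one, StarAlgEquiv.one_apply, diag_diagonal]
    simp only [Function.comp_apply, RCLike.ofReal_re]

end UnitaryConjugation

/-- The dual norm of `‖·‖_v` on Hermitian matrices (w.r.t. the trace pairing) is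
`‖·‖_{v*}`: for Hermitian `H`, `max { tr(HX) : X Hermitian, ‖X‖_v ≤ 1 } = v*(λ(H))`. -/
theorem dual_norm_hermitian {n : ℕ} (v : (Fin n → ℝ) → ℝ)
    (hv_eq0 : ∀ x, v x = 0 ↔ x = 0)
    (hv_smul : ∀ (c : ℝ) (x : Fin n → ℝ), v (c • x) = |c| * v x)
    (hv_add : ∀ x y, v (x + y) ≤ v x + v y)
    (hv_perm : ∀ (σ : Equiv.Perm (Fin n)) (x : Fin n → ℝ), v (x ∘ σ) = v x)
    (vs : (Fin n → ℝ) → ℝ)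
    (hvs : ∀ x, IsGreatest {r : ℝ | ∃ y : Fin n → ℝ, v y ≤ 1 ∧ r = ∑ i, x i * y i} (vs x)) :
    ∀ (H : Matrix (Fin n) (Fin n) ℂ) (hH : H.IsHermitian),
      IsGreatest
        {r : ℝ | ∃ (X : Matrix (Fin n) (Fin n) ℂ) (hX : X.IsHermitian),
          v hX.eigenvalues ≤ 1 ∧ r = (Matrix.trace (H * X)).re}
        (vs hH.eigenvalues) := by
  intro H hH
  exact (dual_norm_hermitian_general (convex_setOf_le_of_add_le_of_smul hv_add hv_smul 1)
    (fun σ x hx ↦ (hv_perm σ x).trans_le hx) hH).symm ▸ hvs hH.eigenvalues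
end
end

section
/- Let v be a norm on ℝ^n invariant under coordinate permutations. For every Hermitian n×n matrix H, ‖H‖_v ≥ v(D(H)), where D(H) ∈ ℝ^n is the vector of diagonal entries of H (which are real). -/
noncomputable section
open scoped Classical
open Matrix

/-!
Write `H = U Λ Uᴴ` with `U` unitary and `Λ` the diagonal matrix of eigenvalues. Then
`H i i = ∑ j, ‖U i j‖² λ j`, so the diagonal of `H` is the image of `λ` under the doubly stochastic
matrix `(‖U i j‖²)`. By Birkhoff's theorem the diagonal therefore lies in the convex hull of the
permutations of `λ`. All of these permutations lie in the sublevel set of `v` at height `v λ`, which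
is convex because `v` is a norm.
-/

theorem le_of_mem_convexHull_range_perm {R ι β : Type*} [Semiring R] [PartialOrder R] [Preorder β]
    {f : (ι → R) → β} (hf : QuasiconvexOn R Set.univ f)
    (hf_perm : ∀ (σ : Equiv.Perm ι) (x : ι → R), f (x ∘ σ) = f x) {x y : ι → R}
    (hy : y ∈ convexHull R (Set.range fun σ : Equiv.Perm ι => x ∘ σ)) : f y ≤ f x := by
  have range_subset : (Set.range fun σ : Equiv.Perm ι => x ∘ σ) ⊆ {z ∈ Set.univ | f z ≤ f x} := by
    rintro _ ⟨σ, rfl⟩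
    exact ⟨Set.mem_univ _, (hf_perm σ x).le⟩
  exact (convexHull_min range_subset (hf (f x)) hy).2

theorem mulVec_mem_convexHull_range_perm {R ι : Type*} [Field R] [LinearOrder R]
    [IsStrictOrderedRing R] [Fintype ι] [DecidableEq ι] {M : Matrix ι ι R}
    (hM : M ∈ doublyStochastic R ι) (x : ι → R) :
    M *ᵥ x ∈ convexHull R (Set.range fun σ : Equiv.Perm ι => x ∘ σ) := by
  obtain ⟨w, w_nonneg, w_sum, rfl⟩ := exists_eq_sum_perm_of_mem_doublyStochastic hM
  refine mem_convexHull_of_exists_fintype w (fun σ : Equiv.Perm ι => x ∘ σ) w_nonneg w_sum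
    Set.mem_range_self ?_
  simp only [sum_mulVec, smul_mulVec, permMatrix_mulVec]

section RCLike

variable {𝕜 ι κ : Type*} [RCLike 𝕜] [Fintype κ]

theorem re_mul_diagonal_mul_conjTranspose_apply_self [DecidableEq κ]
    (A : Matrix ι κ 𝕜) (d : κ → ℝ) (i : ι) :
    RCLike.re ((A * (diagonal (RCLike.ofReal ∘ d) : Matrix κ κ 𝕜) * Aᴴ : Matrix ι ι 𝕜) i i) =
      (A.map (‖·‖ ^ 2) *ᵥ d) i := by
  have re_term (j : κ) : RCLike.re (A i j * (d j : 𝕜) * star (A i j)) = ‖A i j‖ ^ 2 * d j := by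
    rw [mul_right_comm, RCLike.star_def, RCLike.mul_conj]
    norm_cast
  rw [mul_apply, map_sum]
  simp only [mul_diagonal, conjTranspose_apply, Function.comp_apply, re_term, mulVec, dotProduct,
    map_apply]

theorem map_norm_sq_mulVec_one [DecidableEq ι] {A : Matrix ι κ 𝕜} (hA : A * Aᴴ = 1) :
    A.map (‖·‖ ^ 2) *ᵥ (1 : κ → ℝ) = 1 := by
  classical
  have diagonal_ofReal_one : diagonal (RCLike.ofReal ∘ (1 : κ → ℝ)) = (1 : Matrix κ κ 𝕜) := by
    ext i j
    simp [diagonal_apply, one_apply]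
  funext i
  rw [← re_mul_diagonal_mul_conjTranspose_apply_self, diagonal_ofReal_one, Matrix.mul_one, hA,
    one_apply_eq, RCLike.one_re, Pi.one_apply]

variable [DecidableEq κ]

theorem map_norm_sq_mem_doublyStochastic {U : Matrix κ κ 𝕜} (hU : U ∈ unitaryGroup κ 𝕜) :
    U.map (‖·‖ ^ 2) ∈ doublyStochastic ℝ κ := by
  have map_conjTranspose : Uᴴ.map (‖·‖ ^ 2) = (U.map (‖·‖ ^ 2))ᵀ := by
    ext i j
    simp
  refine ⟨fun i j => sq_nonneg ‖U i j‖, map_norm_sq_mulVec_one (mem_unitaryGroup_iff.1 hU), ?_⟩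
  rw [← mulVec_transpose, ← map_conjTranspose]
  exact map_norm_sq_mulVec_one (mem_unitaryGroup_iff.1 (Unitary.star_mem hU))

theorem re_diag_eq_mulVec_eigenvalues {H : Matrix κ κ 𝕜} (hH : H.IsHermitian) :
    (fun i => RCLike.re (H i i)) =
      (hH.eigenvectorUnitary : Matrix κ κ 𝕜).map (‖·‖ ^ 2) *ᵥ hH.eigenvalues := by
  funext i
  rw [← re_mul_diagonal_mul_conjTranspose_apply_self, ← star_eq_conjTranspose,
    ← Unitary.conjStarAlgAut_apply (S := 𝕜), ← hH.spectral_theorem]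

theorem re_diag_mem_convexHull_range_perm_eigenvalues {H : Matrix κ κ 𝕜} (hH : H.IsHermitian) :
    (fun i => RCLike.re (H i i)) ∈
      convexHull ℝ (Set.range fun σ : Equiv.Perm κ => hH.eigenvalues ∘ σ) := by
  rw [re_diag_eq_mulVec_eigenvalues hH]
  exact mulVec_mem_convexHull_range_perm
    (map_norm_sq_mem_doublyStochastic hH.eigenvectorUnitary.2) _

theorem vnorm_ge_diag_general {β : Type*} [Preorder β] {f : (κ → ℝ) → β}
    (hf : QuasiconvexOn ℝ Set.univ f)
    (hf_perm : ∀ (σ : Equiv.Perm κ) (x : κ → ℝ), f (x ∘ σ) = f x)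
    {H : Matrix κ κ 𝕜} (hH : H.IsHermitian) :
    f (fun i => RCLike.re (H i i)) ≤ f hH.eigenvalues :=
  le_of_mem_convexHull_range_perm hf hf_perm (re_diag_mem_convexHull_range_perm_eigenvalues hH)

end RCLike

/-- For a permutation-invariant norm `v` and Hermitian `H`, `‖H‖_v ≥ v(D(H))`,
where `D(H)` is the (real) vector of diagonal entries of `H`. -/
theorem vnorm_ge_diag {n : ℕ} (v : (Fin n → ℝ) → ℝ)
    (hv_eq0 : ∀ x, v x = 0 ↔ x = 0)
    (hv_smul : ∀ (c : ℝ) (x : Fin n → ℝ), v (c • x) = |c| * v x)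
    (hv_add : ∀ x y, v (x + y) ≤ v x + v y)
    (hv_perm : ∀ (σ : Equiv.Perm (Fin n)) (x : Fin n → ℝ), v (x ∘ σ) = v x)
    (H : Matrix (Fin n) (Fin n) ℂ) (hH : H.IsHermitian) :
    v (fun i => (H i i).re) ≤ v hH.eigenvalues := by
  have quasiconvex_v := (Seminorm.of v hv_add hv_smul).convexOn.quasiconvexOn
  exact vnorm_ge_diag_general quasiconvex_v hv_perm hH
end
end

section
/- Let n' ≤ n, let B_1,…,B_m be n'×n' complex matrices, and let A_k be the n×n block matrix with B_k in the upper-left n'×n' corner and zeros elsewhere, for k = 1,…,m. Write 𝒜 = (A_1,…,A_m) and ℬ = (B_1,…,B_m). Then min over all complex linear subspaces U ≤ ℂ^n of (dim 𝒜U − dim U) equals −(n − n') + min over all complex linear subspaces V ≤ ℂ^{n'} of (dim ℬV − dim V). -/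
noncomputable section
open scoped Classical
open Matrix
open scoped ComplexOrder

/-- `𝒜U = ∑ k, A_k U`. -/
def ASpan {m : ℕ} {ι : Type*} [Fintype ι] [DecidableEq ι]
    (A : Fin m → Matrix ι ι ℂ) (U : Submodule ℂ (ι → ℂ)) : Submodule ℂ (ι → ℂ) :=
  ⨆ k, U.map (A k).mulVecLin

/-!
Each block matrix factors as `A_k = e ∘ B_k ∘ p`, where `p` is the surjection onto the first
coordinates and `e` is extension by zero. As `e` is injective, `dim 𝒜U = dim ℬ(pU)`. Rank-nullity
for `p` on `U` gives `dim U ≤ dim pU + dim ker p`, with equality when `U` is a preimage under `p`,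
so preimages of minimisers for `ℬ` are minimisers for `𝒜`.
-/

open Module (finrank)

section RankNullity

theorem finrank_map_of_injective {R M N : Type*} [Semiring R] [AddCommMonoid M] [Module R M]
    [AddCommMonoid N] [Module R N] {e : M →ₗ[R] N} (he : Function.Injective e)
    (U : Submodule R M) : finrank R (U.map e) = finrank R U :=
  (U.equivMapOfInjective e he).finrank_eq.symm

variable {K V W : Type*} [DivisionRing K] [AddCommGroup V] [Module K V] [AddCommGroup W]
  [Module K W] [FiniteDimensional K V]

theorem finrank_map_add_finrank_inf_ker (p : V →ₗ[K] W) (U : Submodule K V) :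
    finrank K (U.map p) + finrank K (U ⊓ p.ker : Submodule K V) = finrank K U := by
  rw [← (p.domRestrict U).finrank_range_add_finrank_ker, LinearMap.range_domRestrict,
    LinearMap.ker_domRestrict, ← Submodule.map_comap_subtype, Submodule.finrank_map_subtype_eq]

theorem finrank_le_finrank_map_add_finrank_ker (p : V →ₗ[K] W) (U : Submodule K V) :
    finrank K U ≤ finrank K (U.map p) + finrank K p.ker := by
  rw [← finrank_map_add_finrank_inf_ker p U]
  gcongr
  exact Submodule.finrank_mono inf_le_right

theorem finrank_comap_of_surjective {p : V →ₗ[K] W} (hp : Function.Surjective p)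
    (S : Submodule K W) : finrank K (S.comap p) = finrank K S + finrank K p.ker := by
  rw [← finrank_map_add_finrank_inf_ker p, Submodule.map_comap_eq_of_surjective hp,
    inf_eq_right.2 (LinearMap.ker_le_comap p)]

end RankNullity

section DimIncrement

variable {K κ V V' W W' : Type*} [DivisionRing K] [AddCommGroup V] [Module K V]
  [AddCommGroup V'] [Module K V'] [AddCommGroup W] [Module K W] [AddCommGroup W'] [Module K W']

/-- The sum `∑ k, T_k U` of the images of `U` under a family of linear maps; `ASpan` is the case of
a tuple of square complex matrices. -/
def jointImage (T : κ → W →ₗ[K] W') (U : Submodule K W) : Submodule K W' :=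
  ⨆ k, U.map (T k)

/-- The quantity `dim (∑ k, T_k U) - dim U` to be minimised over `U`. It is real-valued, so
the subtraction is not truncated; an infinite-dimensional image would count as `0`. -/
def dimIncrement (T : κ → W →ₗ[K] W') (U : Submodule K W) : ℝ :=
  finrank K (jointImage T U) - finrank K U

/-- The minimum of `dimIncrement T` over all subspaces, encoded as an infimum in `ℝ`. -/
def minDimIncrement (T : κ → W →ₗ[K] W') : ℝ :=
  sInf {d | ∃ U, d = dimIncrement T U}

theorem jointImage_comp (e : W' →ₗ[K] V') (T : κ → W →ₗ[K] W') (p : V →ₗ[K] W)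
    (U : Submodule K V) :
    jointImage (fun k ↦ e ∘ₗ T k ∘ₗ p) U = (jointImage T (U.map p)).map e := by
  simp only [jointImage, Submodule.map_iSup, Submodule.map_comp]

theorem neg_finrank_le_dimIncrement [FiniteDimensional K W] (T : κ → W →ₗ[K] W')
    (U : Submodule K W) : -(finrank K W : ℝ) ≤ dimIncrement T U := by
  have finrank_le : (finrank K U : ℝ) ≤ finrank K W := mod_cast U.finrank_le
  have image_nonneg : (0 : ℝ) ≤ finrank K (jointImage T U) := Nat.cast_nonneg _
  rw [dimIncrement]
  linarith only [finrank_le, image_nonneg]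

theorem minDimIncrement_le [FiniteDimensional K W] (T : κ → W →ₗ[K] W') (U : Submodule K W) :
    minDimIncrement T ≤ dimIncrement T U := by
  refine csInf_le ⟨-finrank K W, ?_⟩ ⟨U, rfl⟩
  rintro _ ⟨S, rfl⟩
  exact neg_finrank_le_dimIncrement T S

theorem le_minDimIncrement {T : κ → W →ₗ[K] W'} {c : ℝ} (h : ∀ U, c ≤ dimIncrement T U) :
    c ≤ minDimIncrement T := by
  refine le_csInf ⟨_, ⊥, rfl⟩ ?_
  rintro _ ⟨U, rfl⟩
  exact h U

variable [FiniteDimensional K V] {e : W' →ₗ[K] V'} {p : V →ₗ[K] W}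

theorem neg_finrank_ker_add_dimIncrement_map_le (he : Function.Injective e) (T : κ → W →ₗ[K] W')
    (U : Submodule K V) :
    -finrank K p.ker + dimIncrement T (U.map p) ≤ dimIncrement (fun k ↦ e ∘ₗ T k ∘ₗ p) U := by
  have finrank_le : (finrank K U : ℝ) ≤ finrank K (U.map p) + finrank K p.ker :=
    mod_cast finrank_le_finrank_map_add_finrank_ker p U
  rw [dimIncrement, dimIncrement, jointImage_comp, finrank_map_of_injective he]
  linarith

theorem dimIncrement_comap (he : Function.Injective e) (hp : Function.Surjective p)
    (T : κ → W →ₗ[K] W') (S : Submodule K W) :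
    dimIncrement (fun k ↦ e ∘ₗ T k ∘ₗ p) (S.comap p) = -finrank K p.ker + dimIncrement T S := by
  rw [dimIncrement, dimIncrement, jointImage_comp, finrank_map_of_injective he,
    Submodule.map_comap_eq_of_surjective hp, finrank_comap_of_surjective hp]
  push_cast
  ring

theorem minDimIncrement_comp (he : Function.Injective e) (hp : Function.Surjective p)
    (T : κ → W →ₗ[K] W') :
    minDimIncrement (fun k ↦ e ∘ₗ T k ∘ₗ p) = -finrank K p.ker + minDimIncrement T := by
  have : FiniteDimensional K W := .of_surjective p hp
  apply le_antisymm
  · rw [← sub_le_iff_le_add']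
    refine le_minDimIncrement fun S ↦ ?_
    rw [sub_le_iff_le_add', ← dimIncrement_comap he hp]
    exact minDimIncrement_le _ _
  · refine le_minDimIncrement fun U ↦
      le_trans ?_ (neg_finrank_ker_add_dimIncrement_map_le he T U)
    gcongr
    exact minDimIncrement_le T _

end DimIncrement

section Blocks

variable {ι ι' ρ ρ' : Type*} [Fintype ρ]

theorem mulVecLin_fromBlocks_zero {R : Type*} [CommSemiring R] [Fintype ι]
    (B : Matrix ι' ι R) :
    (fromBlocks B 0 0 0 : Matrix (ι' ⊕ ρ') (ι ⊕ ρ) R).mulVecLin =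
      Function.ExtendByZero.linearMap R Sum.inl ∘ₗ B.mulVecLin ∘ₗ
        LinearMap.funLeft R R Sum.inl := by
  have extend_inl (w : ι' → R) :
      Function.ExtendByZero.linearMap R (Sum.inl : ι' → ι' ⊕ ρ') w = Sum.elim w 0 := by
    ext (i | i) <;> simp [Sum.inl_injective.extend_apply]
  refine LinearMap.ext fun v ↦ ?_
  simp [fromBlocks_mulVec, extend_inl, LinearMap.funLeft]

theorem finrank_ker_funLeft_inl {K : Type*} [DivisionRing K] [Finite ι] :
    finrank K (LinearMap.funLeft K K (Sum.inl : ι → ι ⊕ ρ)).ker = Fintype.card ρ := by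
  cases nonempty_fintype ι
  have rank_nullity :=
    (LinearMap.funLeft K K (Sum.inl : ι → ι ⊕ ρ)).finrank_range_add_finrank_ker
  rw [LinearMap.range_eq_top.2 (LinearMap.funLeft_surjective_of_injective _ _ _ Sum.inl_injective)]
    at rank_nullity
  simpa using rank_nullity

theorem block_min_dim_formula_general {K : Type*} [Field K] [Fintype ι] {m : ℕ}
    (B : Fin m → Matrix ι' ι K) :
    minDimIncrement
        (fun k ↦ (fromBlocks (B k) 0 0 0 : Matrix (ι' ⊕ ρ') (ι ⊕ ρ) K).mulVecLin) =
      -(Fintype.card ρ : ℝ) + minDimIncrement fun k ↦ (B k).mulVecLin := by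
  have extend_injective : Function.Injective
      (Function.ExtendByZero.linearMap K (Sum.inl : ι' → ι' ⊕ ρ')) :=
    Function.extend_injective Sum.inl_injective (0 : ι' ⊕ ρ' → K)
  have funLeft_surjective : Function.Surjective (LinearMap.funLeft K K (Sum.inl : ι → ι ⊕ ρ)) :=
    LinearMap.funLeft_surjective_of_injective _ _ _ Sum.inl_injective
  simp only [mulVecLin_fromBlocks_zero]
  rw [minDimIncrement_comp extend_injective funLeft_surjective, finrank_ker_funLeft_inl]

end Blocks

/-- For the tuple `𝒜` of `n × n` block matrices with `B_k` in the upper-left `n' × n'`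
corner and zeros elsewhere (`n = n' + r`), `min_U (dim 𝒜U - dim U)` equals
`-(n - n') + min_V (dim ℬV - dim V)`. -/
theorem block_min_dim_formula {m n' r : ℕ}
    (B : Fin m → Matrix (Fin n') (Fin n') ℂ) :
    sInf {d : ℝ | ∃ U : Submodule ℂ ((Fin n' ⊕ Fin r) → ℂ),
        d = (Module.finrank ℂ
              (ASpan (fun k => Matrix.fromBlocks (B k) 0 0 0) U) : ℝ)
            - (Module.finrank ℂ U : ℝ)}
      = -(r : ℝ) + sInf {d : ℝ | ∃ V : Submodule ℂ (Fin n' → ℂ),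
          d = (Module.finrank ℂ (ASpan B V) : ℝ) - (Module.finrank ℂ V : ℝ)} := by
  have h := block_min_dim_formula_general (ρ := Fin r) (ρ' := Fin r) B
  rwa [Fintype.card_fin] at h
end
end
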